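/- Let X and Y be normed real vector spaces, n ∈ ℕ, and let L : X → Y, Q : Y → ℝⁿ, and e : ℝⁿ → X be continuous linear maps. Suppose the composite S = Q ∘ L ∘ e : ℝⁿ → ℝⁿ is a linear isomorphism. Let u ∈ X with f = L u, let v ∈ ℝⁿ and set Pu = e(v), and define the discrete solution ũ = e(S⁻¹(Q f)). Then ũ = Pu + (e ∘ S⁻¹ ∘ Q ∘ L)(u − Pu), and consequently ‖u − ũ‖ ≤ (1 + ‖e ∘ S⁻¹ ∘ Q ∘ L‖) · ‖u − Pu‖, where ‖·‖ on operators denotes the operator norm. -/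

import Mathlib

open Function

theorem map_eq_add_map_sub_of_isFixedPt {G F : Type*} [AddCommGroup G] [FunLike F G G]
    [AddMonoidHomClass F G G] {T : F} {p : G} (hp : IsFixedPt T p) (u : G) :
    T u = p + T (u - p) := by
  rw [map_sub, hp.eq, add_sub_cancel]

section

variable {𝕜 X : Type*} [NontriviallyNormedField 𝕜] [SeminormedAddCommGroup X] [NormedSpace 𝕜 X]

theorem norm_sub_map_le_of_isFixedPt {T : X →L[𝕜] X} {p : X} (hp : IsFixedPt T p) (u : X) :
    ‖u - T u‖ ≤ (1 + ‖T‖) * ‖u - p‖ :=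
  calc
    ‖u - T u‖ = ‖(u - p) - T (u - p)‖ := by
      rw [map_eq_add_map_sub_of_isFixedPt hp u, sub_sub]
    _ ≤ ‖u - p‖ + ‖T (u - p)‖ := norm_sub_le _ _
    _ ≤ ‖u - p‖ + ‖T‖ * ‖u - p‖ := by gcongr; exact T.le_opNorm _
    _ = (1 + ‖T‖) * ‖u - p‖ := by ring

variable {Y V W : Type*}
  [AddCommGroup Y] [Module 𝕜 Y] [TopologicalSpace Y]
  [AddCommGroup V] [Module 𝕜 V] [TopologicalSpace V]
  [AddCommGroup W] [Module 𝕜 W] [TopologicalSpace W]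

/-- Here `R` plays the role of `S⁻¹`; it may also be a least-squares pseudo-inverse of an injective
overdetermined system `Q ∘ L ∘ e`, with more collocation points than weights. -/
theorem collocation_error_estimate_general (L : X →L[𝕜] Y) (Q : Y →L[𝕜] W) (e : V →L[𝕜] X)
    (R : W →L[𝕜] V) (hR : LeftInverse R (Q ∘L L ∘L e)) (u : X) (f : Y) (hf : f = L u) (v : V) :
    e (R (Q f)) = e v + (e ∘L R ∘L Q ∘L L) (u - e v) ∧
      ‖u - e (R (Q f))‖ ≤ (1 + ‖e ∘L R ∘L Q ∘L L‖) * ‖u - e v‖ := by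
  subst hf
  have hfix : IsFixedPt (e ∘L R ∘L Q ∘L L) (e v) := congrArg e (hR v)
  exact ⟨map_eq_add_map_sub_of_isFixedPt hfix u, norm_sub_map_le_of_isFixedPt hfix u⟩

end

/-- Abstract collocation error estimate: if `S = Q ∘ L ∘ e` is invertible, then the discrete
solution `ũ = e (S⁻¹ (Q f))` satisfies `ũ = Pu + (e ∘ S⁻¹ ∘ Q ∘ L)(u − Pu)` and
`‖u − ũ‖ ≤ (1 + ‖e ∘ S⁻¹ ∘ Q ∘ L‖) ‖u − Pu‖`, where `Pu = e v`. -/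
theorem collocation_error_estimate {X Y : Type*}
    [NormedAddCommGroup X] [NormedSpace ℝ X]
    [NormedAddCommGroup Y] [NormedSpace ℝ Y] (n : ℕ)
    (L : X →L[ℝ] Y) (Q : Y →L[ℝ] (Fin n → ℝ)) (e : (Fin n → ℝ) →L[ℝ] X)
    (S : (Fin n → ℝ) ≃L[ℝ] (Fin n → ℝ))
    (hS : ∀ v : Fin n → ℝ, S v = Q (L (e v)))
    (u : X) (f : Y) (hf : f = L u) (v : Fin n → ℝ) :
    e (S.symm (Q f)) =
      e v + (e.comp (((S.symm : (Fin n → ℝ) →L[ℝ] (Fin n → ℝ))).comp (Q.comp L)))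
        (u - e v) ∧
    ‖u - e (S.symm (Q f))‖ ≤
      (1 + ‖e.comp (((S.symm : (Fin n → ℝ) →L[ℝ] (Fin n → ℝ))).comp (Q.comp L))‖) *
        ‖u - e v‖ :=
  collocation_error_estimate_general L Q e S.symm
    (fun w => S.symm_apply_eq.2 (hS w).symm) u f hf v
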